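/- Let D = {z ∈ ℂ : |z| ≤ r} with r > 0 sufficiently small, and set X₁ = {(z, z̄/(1+z̄)) : z ∈ D} and X₂ = {(−z, z̄/(1+z̄)) : z ∈ D}, so that X₁ ∪ X₂ = π⁻¹(X) for π(z, w) = (z², w) and X = {(z², z̄/(1+z̄)) : z ∈ D}. Then R(X₁ ∪ X₂) = C(X₁ ∪ X₂); in particular, X₁ ∪ X₂ is rationally convex. -/

import Mathlib

open Complex MvPolynomial Metric

noncomputable section

/-- `R(K) = C(K)` for `K ⊆ ℂ²` (with `ℂ²` realized as `Fin 2 → ℂ`): every continuous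
function on `K` is a uniform limit on `K` of rational functions with poles off `K`. -/
def RatEqC (K : Set (Fin 2 → ℂ)) : Prop :=
  ∀ f : (Fin 2 → ℂ) → ℂ, ContinuousOn f K → ∀ ε : ℝ, 0 < ε →
    ∃ P Q : MvPolynomial (Fin 2) ℂ, (∀ x ∈ K, eval x Q ≠ 0) ∧
      ∀ x ∈ K, ‖f x - eval x P / eval x Q‖ < ε

/-- The rationally convex hull of `K ⊆ ℂ²`. -/
def RHull (K : Set (Fin 2 → ℂ)) : Set (Fin 2 → ℂ) :=
  {z | ∀ P Q : MvPolynomial (Fin 2) ℂ, (∀ x ∈ K ∪ {z}, eval x Q ≠ 0) →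
    ‖eval z P / eval z Q‖ ≤ sSup ((fun w => ‖eval w P / eval w Q‖) '' K)}

/-
On `X₁ ∪ X₂` the coordinate `a = x₀` and the rational function `b = x₁ / (1 - x₁)` satisfy
`conj a = ± b`, with a sign depending on the branch. Hence `a * b` is real and equals `± ‖a‖²`, so
by the Weierstrass theorem `φ(a * b)` belongs to the closed algebra `R(X₁ ∪ X₂)` for every
continuous `φ` on `ℝ`. Letting `φ` tend to the sign function recovers `conj a = lim b * φ(a * b)`,
the jump of the sign at `0` being harmless since `b` vanishes where `a * b` does. The same holds for
`conj b`, and Stone–Weierstrass applies. Rational convexity of `K` follows from `R(K) = C(K)`: for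
`z ∉ K`, a combination of the functions `xᵢ - zᵢ` with coefficients in `C(K)` equals `1`, so one
with rational coefficients has no zero on `K`, and its numerator can be taken to vanish at `z`.
-/

section FunctionAlgebras

variable {X 𝕜 : Type*} [TopologicalSpace X] [CompactSpace X] [RCLike 𝕜]

theorem real_comp_mem_topologicalClosure {A : Subalgebra 𝕜 C(X, 𝕜)} {f : C(X, ℝ)}
    (hf : f.realToRCLike 𝕜 ∈ A) (φ : C(ℝ, ℝ)) :
    (φ.comp f).realToRCLike 𝕜 ∈ A.topologicalClosure := by
  let I : C(X, ℝ) →L[ℝ] C(X, 𝕜) := RCLike.ofRealCLM.compLeftContinuous ℝ X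
  let B : Subalgebra ℝ C(X, ℝ) := (A.restrictScalars ℝ).comap
    (RCLike.ofRealAm.compLeftContinuous ℝ RCLike.continuous_ofReal)
  have hφf : φ.comp f ∈ B.topologicalClosure :=
    ContinuousMap.comp_attachBound_mem_closure B ⟨f, hf⟩ (φ.restrict _)
  exact map_mem_closure I.continuous hφf fun _ hg => hg

theorem norm_conj_sub_mul_sign_approx_lt {z w : 𝕜}
    (h : (starRingEnd 𝕜) z = w ∨ (starRingEnd 𝕜) z = -w) {ε : ℝ} (hε : 0 < ε) :
    ‖(starRingEnd 𝕜) z - w * (RCLike.re (z * w) / (|RCLike.re (z * w)| + ε ^ 2) : ℝ)‖ < ε := by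
  set t := ‖z‖
  have hpos : 0 < t ^ 2 + ε ^ 2 := by positivity
  have htε : t * (ε ^ 2 / (t ^ 2 + ε ^ 2)) < ε := by
    rw [← mul_div_assoc, div_lt_iff₀ hpos]
    nlinarith [mul_nonneg hε.le (sq_nonneg (t - ε)), pow_pos hε 3]
  have hsub : 1 - t ^ 2 / (t ^ 2 + ε ^ 2) = ε ^ 2 / (t ^ 2 + ε ^ 2) := by
    field_simp
    ring
  have hre : RCLike.re (z * (starRingEnd 𝕜) z) = t ^ 2 := by
    rw [RCLike.mul_conj, ← RCLike.ofReal_pow, RCLike.ofReal_re]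
  have happrox : w * (RCLike.re (z * w) / (|RCLike.re (z * w)| + ε ^ 2) : ℝ) =
      (starRingEnd 𝕜) z * (t ^ 2 / (t ^ 2 + ε ^ 2) : ℝ) := by
    rcases h with h | h
    · rw [← h, hre, abs_of_nonneg (sq_nonneg t)]
    · rw [← neg_eq_iff_eq_neg.mpr h, mul_neg, map_neg, hre, abs_neg, abs_of_nonneg (sq_nonneg t),
        neg_div, RCLike.ofReal_neg, neg_mul_neg]
  have hdiff : (starRingEnd 𝕜) z - (starRingEnd 𝕜) z * (t ^ 2 / (t ^ 2 + ε ^ 2) : ℝ) =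
      (starRingEnd 𝕜) z * (ε ^ 2 / (t ^ 2 + ε ^ 2) : ℝ) := by
    rw [← hsub, RCLike.ofReal_sub, RCLike.ofReal_one, mul_sub, mul_one]
  rwa [happrox, hdiff, norm_mul, RCLike.norm_conj, RCLike.norm_of_nonneg (by positivity)]

theorem star_mem_topologicalClosure_of_conj_eq_or_eq_neg {A : Subalgebra 𝕜 C(X, 𝕜)}
    {a b : C(X, 𝕜)} (ha : a ∈ A) (hb : b ∈ A)
    (hab : ∀ x, (starRingEnd 𝕜) (a x) = b x ∨ (starRingEnd 𝕜) (a x) = -b x) :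
    star a ∈ A.topologicalClosure := by
  let c : C(X, ℝ) := ⟨fun x => RCLike.re (a x * b x), by fun_prop⟩
  have hc : c.realToRCLike 𝕜 = a * b := by
    ext x
    have hreal : (starRingEnd 𝕜) (a x * b x) = a x * b x := by
      rcases hab x with h | h
      · rw [map_mul, ← h, RCLike.conj_conj, mul_comm]
      · rw [map_mul, ← neg_eq_iff_eq_neg.mpr h, map_neg, RCLike.conj_conj, mul_neg, mul_neg,
          mul_comm]
    exact RCLike.conj_eq_iff_re.mp hreal
  rw [← SetLike.mem_coe, ← A.isClosed_topologicalClosure.closure_eq, Metric.mem_closure_iff]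
  intro ε hε
  let φ : C(ℝ, ℝ) := ⟨fun s => s / (|s| + ε ^ 2),
    continuous_id.div (by fun_prop) fun s => by positivity⟩
  have hφ : (φ.comp c).realToRCLike 𝕜 ∈ A.topologicalClosure :=
    real_comp_mem_topologicalClosure (hc ▸ A.mul_mem ha hb) φ
  refine ⟨b * (φ.comp c).realToRCLike 𝕜, mul_mem (A.le_topologicalClosure hb) hφ, ?_⟩
  rw [ContinuousMap.dist_lt_iff hε]
  intro x
  rw [dist_eq_norm]
  exact norm_conj_sub_mul_sign_approx_lt (hab x) hε

theorem subalgebra_eq_top_of_isClosed_of_star_mem {B : Subalgebra 𝕜 C(X, 𝕜)}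
    (hB : IsClosed (B : Set C(X, 𝕜))) {S : Set C(X, 𝕜)} (hS : ∀ f ∈ S, f ∈ B ∧ star f ∈ B)
    (hsep : ((fun f : C(X, 𝕜) => (f : X → 𝕜)) '' S).SeparatesPoints) : B = ⊤ := by
  let T : StarSubalgebra 𝕜 C(X, 𝕜) :=
    { B ⊓ star B with
      star_mem' := fun {f} hf => ⟨hf.2, show star (star f) ∈ B from (star_star f).symm ▸ hf.1⟩ }
  have hT : T.topologicalClosure = ⊤ :=
    ContinuousMap.starSubalgebra_topologicalClosure_eq_top_of_separatesPoints T
      (Set.separatesPoints_mono (Set.image_mono hS) hsep)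
  refine Algebra.eq_top_iff.mpr fun f => ?_
  have hf : f ∈ T.topologicalClosure := hT ▸ StarSubalgebra.mem_top
  exact closure_minimal (fun g (hg : g ∈ T) => hg.1) hB hf

theorem topologicalClosure_eq_top_of_conj_eq_or_eq_neg {A : Subalgebra 𝕜 C(X, 𝕜)}
    {S : Set C(X, 𝕜)} (hSA : S ⊆ A)
    (hS : ∀ a ∈ S, ∃ b ∈ A, ∀ x, (starRingEnd 𝕜) (a x) = b x ∨ (starRingEnd 𝕜) (a x) = -b x)
    (hsep : ((fun f : C(X, 𝕜) => (f : X → 𝕜)) '' S).SeparatesPoints) :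
    A.topologicalClosure = ⊤ := by
  refine subalgebra_eq_top_of_isClosed_of_star_mem A.isClosed_topologicalClosure
    (fun a ha => ⟨A.le_topologicalClosure (hSA ha), ?_⟩) hsep
  obtain ⟨b, hb, hab⟩ := hS a ha
  exact star_mem_topologicalClosure_of_conj_eq_or_eq_neg (hSA ha) hb hab

end FunctionAlgebras

section RationalFunctions

variable {σ : Type*}

@[fun_prop]
theorem continuous_subtype_val_apply {K : Set (σ → ℂ)} (i : σ) : Continuous fun x : K => x.1 i :=
  (continuous_apply i).comp continuous_subtype_val

/-- The algebra of restrictions to `K` of rational functions `P / Q` with poles off `K`. Its uniform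
closure is `R(K)`, so that `R(K) = C(K)` reads `(rationalFunctionsOn K).topologicalClosure = ⊤`. -/
def rationalFunctionsOn (K : Set (σ → ℂ)) : Subalgebra ℂ C(K, ℂ) where
  carrier := {f | ∃ P Q : MvPolynomial σ ℂ, (∀ x ∈ K, eval x Q ≠ 0) ∧
      ∀ x : K, f x = eval x.1 P / eval x.1 Q}
  mul_mem' := by
    rintro f g ⟨P, Q, hQ, hf⟩ ⟨P', Q', hQ', hg⟩
    refine ⟨P * P', Q * Q', fun x hx => ?_, fun x => ?_⟩
    · rw [map_mul]
      exact mul_ne_zero (hQ x hx) (hQ' x hx)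
    · rw [ContinuousMap.mul_apply, hf, hg, map_mul, map_mul, div_mul_div_comm]
  add_mem' := by
    rintro f g ⟨P, Q, hQ, hf⟩ ⟨P', Q', hQ', hg⟩
    refine ⟨P * Q' + Q * P', Q * Q', fun x hx => ?_, fun x => ?_⟩
    · rw [map_mul]
      exact mul_ne_zero (hQ x hx) (hQ' x hx)
    · rw [ContinuousMap.add_apply, hf, hg, map_mul, map_add, map_mul, map_mul,
        div_add_div _ _ (hQ _ x.2) (hQ' _ x.2)]
  algebraMap_mem' c := ⟨C c, 1, by simp, by simp⟩

theorem exists_sum_sub_mul_eq_one [Fintype σ] {K : Set (σ → ℂ)} {z : σ → ℂ} (hz : z ∉ K) :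
    ∃ g : σ → C(K, ℂ), ∀ x : K, ∑ i, (x.1 i - z i) * g i x = 1 := by
  let d : C(K, ℂ) := ⟨fun x => ∑ i, (x.1 i - z i) * (starRingEnd ℂ) (x.1 i - z i), by fun_prop⟩
  have hd : ∀ x, d x ≠ 0 := by
    intro x hx
    have hnorm : ∑ i, ‖x.1 i - z i‖ ^ 2 = 0 := by
      simp only [d, ContinuousMap.coe_mk, Complex.mul_conj'] at hx
      exact_mod_cast hx
    have hzero := (Finset.sum_eq_zero_iff_of_nonneg fun i _ => sq_nonneg _).mp hnorm
    have hxz : x.1 = z := funext fun i => by simpa [sub_eq_zero] using hzero i (Finset.mem_univ i)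
    exact hz (hxz ▸ x.2)
  refine ⟨fun i => ⟨fun x => (starRingEnd ℂ) (x.1 i - z i) / d x,
    Continuous.div (by fun_prop) d.continuous hd⟩, fun x => ?_⟩
  simp only [ContinuousMap.coe_mk, ← mul_div_assoc, ← Finset.sum_div]
  exact div_self (hd x)

theorem exists_mem_rationalFunctionsOn_sum_ne_zero [Fintype σ] {K : Set (σ → ℂ)} [CompactSpace K]
    (hK : (rationalFunctionsOn K).topologicalClosure = ⊤) {z : σ → ℂ} (hz : z ∉ K) :
    ∃ g : σ → C(K, ℂ), (∀ i, g i ∈ rationalFunctionsOn K) ∧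
      ∀ x : K, ∑ i, (x.1 i - z i) * g i x ≠ 0 := by
  let l : σ → C(K, ℂ) := fun i => ⟨fun x => x.1 i - z i, by fun_prop⟩
  let U : Set (σ → C(K, ℂ)) := {g | dist (∑ i, l i * g i) 1 < 1}
  have hU : IsOpen U := isOpen_lt (by fun_prop) continuous_const
  have hne : U.Nonempty := by
    obtain ⟨g, hg⟩ := exists_sum_sub_mul_eq_one hz
    have hg1 : ∑ i, l i * g i = 1 := by
      ext x
      simpa [l] using hg x
    exact ⟨g, by simp [U, hg1]⟩
  have hdense : Dense (rationalFunctionsOn K : Set C(K, ℂ)) := by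
    rw [dense_iff_closure_eq, ← Subalgebra.topologicalClosure_coe, hK, Algebra.coe_top]
  obtain ⟨g, hgR, hgU⟩ := (dense_pi Set.univ fun _ _ => hdense).exists_mem_open hU hne
  refine ⟨g, fun i => hgR i (Set.mem_univ i), fun x hx => ?_⟩
  have hx1 := (ContinuousMap.dist_apply_le_dist x).trans_lt hgU
  simp [l, hx] at hx1

theorem exists_eval_eq_zero_and_ne_zero_on [Finite σ] {K : Set (σ → ℂ)} [CompactSpace K]
    (hK : (rationalFunctionsOn K).topologicalClosure = ⊤) {z : σ → ℂ} (hz : z ∉ K) :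
    ∃ Q : MvPolynomial σ ℂ, eval z Q = 0 ∧ ∀ x ∈ K, eval x Q ≠ 0 := by
  classical
  have := Fintype.ofFinite σ
  obtain ⟨g, hg, hne⟩ := exists_mem_rationalFunctionsOn_sum_ne_zero hK hz
  choose P Q hQ hPQ using hg
  refine ⟨∑ i, (X i - C (z i)) * (P i * ∏ j ∈ Finset.univ.erase i, Q j), by simp, fun x hx => ?_⟩
  have hclear : eval x (∑ i, (X i - C (z i)) * (P i * ∏ j ∈ Finset.univ.erase i, Q j)) =
      (∏ j, eval x (Q j)) * ∑ i, (x i - z i) * g i ⟨x, hx⟩ := by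
    simp only [map_sum, map_mul, map_sub, map_prod, eval_X, eval_C, Finset.mul_sum, hPQ]
    refine Finset.sum_congr rfl fun i _ => ?_
    rw [← Finset.mul_prod_erase _ _ (Finset.mem_univ i)]
    field_simp [hQ i x hx]
  rw [hclear]
  exact mul_ne_zero (Finset.prod_ne_zero_iff.mpr fun j _ => hQ j x hx) (hne ⟨x, hx⟩)

end RationalFunctions

theorem ratEqC_of_topologicalClosure_eq_top {K : Set (Fin 2 → ℂ)} [CompactSpace K]
    (hK : (rationalFunctionsOn K).topologicalClosure = ⊤) : RatEqC K := by
  intro f hf ε hε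
  let F : C(K, ℂ) := ⟨fun x => f x, hf.domRestrict⟩
  have hF : F ∈ (rationalFunctionsOn K).topologicalClosure := hK ▸ Algebra.mem_top
  obtain ⟨g, ⟨P, Q, hQ, hg⟩, hFg⟩ := Metric.mem_closure_iff.mp hF ε hε
  refine ⟨P, Q, hQ, fun x hx => ?_⟩
  have hclose := (ContinuousMap.dist_lt_iff hε).mp hFg ⟨x, hx⟩
  rwa [hg, dist_eq_norm] at hclose

theorem notMem_rHull_of_eval_eq_zero {K : Set (Fin 2 → ℂ)} (hK : IsCompact K) {z : Fin 2 → ℂ}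
    {Q : MvPolynomial (Fin 2) ℂ} (hQz : eval z Q = 0) (hQK : ∀ x ∈ K, eval x Q ≠ 0) :
    z ∉ RHull K := by
  intro hz
  obtain ⟨m, hm, hmK⟩ := hK.exists_forall_le' (MvPolynomial.continuous_eval Q).norm.continuousOn
    fun x hx => norm_pos_iff.mpr (hQK x hx)
  -- Translating `Q` by a small constant turns the pole of `1 / Q` at `z` into a large finite value.
  let c : ℂ := (m / 3 : ℝ)
  have hc : ‖c‖ = m / 3 := Complex.norm_of_nonneg (by positivity)
  have hlow : ∀ x ∈ K, 2 * m / 3 ≤ ‖eval x (Q + C c)‖ := by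
    intro x hx
    have htri := norm_sub_le_norm_add (eval x Q) c
    rw [map_add, eval_C]
    linarith [hmK x hx]
  have hzval : ‖eval z (Q + C c)‖ = m / 3 := by rw [map_add, eval_C, hQz, zero_add, hc]
  have hne : ∀ x ∈ K ∪ {z}, eval x (Q + C c) ≠ 0 := by
    rintro x (hx | rfl) <;> rw [← norm_pos_iff]
    · linarith [hlow x hx]
    · linarith
  have hsup : sSup ((fun w => ‖eval w 1 / eval w (Q + C c)‖) '' K) ≤ (2 * m / 3)⁻¹ := by
    refine Real.sSup_le ?_ (by positivity)
    rintro _ ⟨x, hx, rfl⟩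
    simp only [map_one, one_div, norm_inv]
    exact inv_anti₀ (by positivity) (hlow x hx)
  have hle := (hz 1 (Q + C c) hne).trans hsup
  rw [map_one, one_div, norm_inv, hzval, inv_le_inv₀ (by positivity) (by positivity)] at hle
  linarith

theorem subset_rHull {K : Set (Fin 2 → ℂ)} (hK : IsCompact K) : K ⊆ RHull K := by
  intro z hz P Q hQ
  have hcont : ContinuousOn (fun w => ‖eval w P / eval w Q‖) K :=
    ((MvPolynomial.continuous_eval P).continuousOn.div
      (MvPolynomial.continuous_eval Q).continuousOn fun x hx => hQ x (Or.inl hx)).norm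
  exact le_csSup (hK.image_of_continuousOn hcont).bddAbove ⟨z, hz, rfl⟩

theorem rHull_eq_self_of_topologicalClosure_eq_top {K : Set (Fin 2 → ℂ)} [CompactSpace K]
    (hK : (rationalFunctionsOn K).topologicalClosure = ⊤) : RHull K = K := by
  have hcpt : IsCompact K := isCompact_iff_compactSpace.mpr ‹_›
  refine Set.Subset.antisymm (fun z hz => ?_) (subset_rHull hcpt)
  by_contra hzK
  obtain ⟨Q, hQz, hQK⟩ := exists_eval_eq_zero_and_ne_zero_on hK hzK
  exact notMem_rHull_of_eval_eq_zero hcpt hQz hQK hz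

theorem topologicalClosure_rationalFunctionsOn_eq_top_of_conj {K : Set (Fin 2 → ℂ)} [CompactSpace K]
    (h1 : ∀ x ∈ K, 1 - x 1 ≠ 0)
    (hconj : ∀ x ∈ K, (starRingEnd ℂ) (x 0) = x 1 / (1 - x 1) ∨
      (starRingEnd ℂ) (x 0) = -(x 1 / (1 - x 1))) :
    (rationalFunctionsOn K).topologicalClosure = ⊤ := by
  let a : C(K, ℂ) := ⟨fun x => x.1 0, by fun_prop⟩
  let b : C(K, ℂ) := ⟨fun x => x.1 1 / (1 - x.1 1),
    Continuous.div (by fun_prop) (by fun_prop) fun x => h1 _ x.2⟩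
  have ha : a ∈ rationalFunctionsOn K := ⟨X 0, 1, by simp, by simp [a]⟩
  have hb : b ∈ rationalFunctionsOn K := ⟨X 1, 1 - X 1, by simpa using h1, by simp [b]⟩
  have hab : ∀ x, (starRingEnd ℂ) (a x) = b x ∨ (starRingEnd ℂ) (a x) = -b x :=
    fun x => hconj _ x.2
  have hba : ∀ x, (starRingEnd ℂ) (b x) = a x ∨ (starRingEnd ℂ) (b x) = -a x := by
    intro x
    rcases hab x with hx | hx
    · left
      rw [← hx, Complex.conj_conj]
    · right
      rw [← neg_eq_iff_eq_neg.mpr hx, map_neg, Complex.conj_conj]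
  refine topologicalClosure_eq_top_of_conj_eq_or_eq_neg (S := {a, b})
    (Set.pair_subset ha hb) ?_ ?_
  · rintro _ (rfl | rfl)
    · exact ⟨b, hb, hab⟩
    · exact ⟨a, ha, hba⟩
  · intro x y hxy
    by_contra! hsame
    have h0_eq : x.1 0 = y.1 0 := hsame a ⟨a, by simp, rfl⟩
    have hb_eq : x.1 1 / (1 - x.1 1) = y.1 1 / (1 - y.1 1) := hsame b ⟨b, by simp, rfl⟩
    rw [div_eq_div_iff (h1 _ x.2) (h1 _ y.2)] at hb_eq
    have h1_eq : x.1 1 = y.1 1 := by linear_combination hb_eq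
    exact hxy (Subtype.ext (funext (Fin.forall_fin_two.mpr ⟨h0_eq, h1_eq⟩)))

theorem isCompact_image_pair {α β : Type*} [TopologicalSpace α] [TopologicalSpace β] {E : Set α}
    (hE : IsCompact E) {f g : α → β} (hf : ContinuousOn f E) (hg : ContinuousOn g E) :
    IsCompact ((fun z => ![f z, g z]) '' E) :=
  hE.image_of_continuousOn (continuousOn_pi.mpr (Fin.forall_fin_two.mpr ⟨hf, hg⟩))

theorem one_sub_div_one_add {𝕜 : Type*} [Field 𝕜] {u : 𝕜} (hu : 1 + u ≠ 0) :
    1 - u / (1 + u) = (1 + u)⁻¹ := by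
  field_simp
  ring

theorem stmt10_general {E : Set ℂ} (hE : IsCompact E) (hE1 : -1 ∉ E) (X₁ X₂ : Set (Fin 2 → ℂ))
    (hX₁ : X₁ = (fun z : ℂ => ![z, (starRingEnd ℂ) z / (1 + (starRingEnd ℂ) z)]) '' E)
    (hX₂ : X₂ = (fun z : ℂ => ![-z, (starRingEnd ℂ) z / (1 + (starRingEnd ℂ) z)]) '' E) :
    RatEqC (X₁ ∪ X₂) ∧ RHull (X₁ ∪ X₂) = X₁ ∪ X₂ := by
  have hne : ∀ z ∈ E, 1 + (starRingEnd ℂ) z ≠ 0 := by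
    intro z hz h
    have hz1 : z = -1 := by simpa using congrArg (starRingEnd ℂ) (eq_neg_of_add_eq_zero_right h)
    exact hE1 (hz1 ▸ hz)
  have hw : ContinuousOn (fun z => (starRingEnd ℂ) z / (1 + (starRingEnd ℂ) z)) E :=
    ContinuousOn.div (by fun_prop) (by fun_prop) hne
  have hX : IsCompact (X₁ ∪ X₂) := by
    rw [hX₁, hX₂]
    exact (isCompact_image_pair hE continuousOn_id hw).union
      (isCompact_image_pair hE continuousOn_neg hw)
  have : CompactSpace ↥(X₁ ∪ X₂) := isCompact_iff_compactSpace.mp hX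
  have htop : (rationalFunctionsOn (X₁ ∪ X₂)).topologicalClosure = ⊤ := by
    subst hX₁ hX₂
    apply topologicalClosure_rationalFunctionsOn_eq_top_of_conj <;>
      rintro _ (⟨z, hz, rfl⟩ | ⟨z, hz, rfl⟩) <;>
      simp [one_sub_div_one_add (hne z hz), hne z hz]
  exact ⟨ratEqC_of_topologicalClosure_eq_top htop,
    rHull_eq_self_of_topologicalClosure_eq_top htop⟩

/-- For `D` a sufficiently small closed disk centered at the origin and
`X₁ = {(z, z̄/(1+z̄)) : z ∈ D}`, `X₂ = {(−z, z̄/(1+z̄)) : z ∈ D}`, one has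
`R(X₁ ∪ X₂) = C(X₁ ∪ X₂)`; in particular `X₁ ∪ X₂` is rationally convex. -/
theorem stmt10 :
    ∃ r₀ : ℝ, 0 < r₀ ∧ ∀ r : ℝ, 0 < r → r ≤ r₀ →
      ∀ X₁ X₂ : Set (Fin 2 → ℂ),
        X₁ = (fun z : ℂ => ![z, (starRingEnd ℂ) z / (1 + (starRingEnd ℂ) z)]) ''
            closedBall (0 : ℂ) r →
        X₂ = (fun z : ℂ => ![-z, (starRingEnd ℂ) z / (1 + (starRingEnd ℂ) z)]) ''
            closedBall (0 : ℂ) r →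
        RatEqC (X₁ ∪ X₂) ∧ RHull (X₁ ∪ X₂) = X₁ ∪ X₂ := by
  refine ⟨1 / 2, by norm_num, fun r _ hr => stmt10_general (isCompact_closedBall 0 r) fun h => ?_⟩
  have hr1 : 1 ≤ r := by simpa using h
  linarith
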